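/- The linear span of the set of resolvent functions {ρ_s : s ∈ ℝ \ {0}} is dense in C₀(ℝ, ℂ) with respect to the supremum norm; equivalently, the closed linear span of the basic resolvents coincides with the C*-algebra C₀(ℝ, ℂ) that they generate. -/

import Mathlib

/-!
Let `M` be the closed linear span of the resolvents. For `s ≠ t` the resolvent identity
`ρ_s ρ_t = (i (s - t))⁻¹ (ρ_s - ρ_t)` puts `ρ_s ρ_t` in the span, and `ρ_s ^ 2` is the norm limit of
`ρ_s ρ_t` as `t → s`; hence `M` is closed under multiplication (`mul_mem_closedSpan`). It is closed
under conjugation because `star ρ_s = ρ_{-s}` (`star_mem_closedSpan`).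

Mathlib's Stone-Weierstrass theorem concerns compact spaces, so it is applied on the one-point
compactification of `ℝ`, to the star subalgebra `unitization` of functions `g + c` with `g ∈ M` and
`c` constant. The constant can be removed at the end: if `g + c` is uniformly `ε`-close to `f ∈ C₀`,
then evaluation at infinity gives `‖c‖ < ε`, so `g` is `2 ε`-close to `f`.
-/

open Complex ZeroAtInfty

/-- The set of basic resolvent functions `ρ_s(x) = (x - i s)⁻¹`, `s ∈ ℝ \ {0}`, viewed as
elements of `C₀(ℝ, ℂ)`. -/
def basicResolvents : Set C₀(ℝ, ℂ) :=
  {g | ∃ s : ℝ, s ≠ 0 ∧ ∀ x : ℝ, g x = ((x : ℂ) - Complex.I * s)⁻¹}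

lemma sub_I_mul_ne_zero {s : ℝ} (hs : s ≠ 0) (x : ℝ) : (x : ℂ) - I * s ≠ 0 := by
  intro h
  apply hs
  simpa [I_im] using congrArg Complex.im h

/-- The resolvent function `ρ_s(x) = (x - i s)⁻¹` as an element of `C₀(ℝ, ℂ)`. -/
noncomputable def resolventFn (s : ℝ) (hs : s ≠ 0) : C₀(ℝ, ℂ) where
  toFun x := ((x : ℂ) - I * s)⁻¹
  continuous_toFun := by
    have := sub_I_mul_ne_zero hs
    fun_prop (disch := assumption)
  zero_at_infty' := by
    refine Filter.tendsto_inv₀_cobounded.comp ?_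
    rw [← tendsto_norm_atTop_iff_cobounded]
    refine Filter.tendsto_atTop_mono (fun x => ?_) (tendsto_norm_cocompact_atTop (E := ℝ))
    simpa using Complex.abs_re_le_norm ((x : ℂ) - I * s)

@[simp] lemma resolventFn_apply (s : ℝ) (hs : s ≠ 0) (x : ℝ) :
    resolventFn s hs x = ((x : ℂ) - I * s)⁻¹ := rfl

lemma resolventFn_mem (s : ℝ) (hs : s ≠ 0) : resolventFn s hs ∈ basicResolvents :=
  ⟨s, hs, fun _ => rfl⟩

lemma norm_resolventFn_le (s : ℝ) (hs : s ≠ 0) : ‖resolventFn s hs‖ ≤ |s|⁻¹ := by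
  rw [← ZeroAtInftyContinuousMap.norm_toBCF_eq_norm]
  refine (BoundedContinuousFunction.norm_le (by positivity)).2 fun x => ?_
  change ‖((x : ℂ) - I * s)⁻¹‖ ≤ _
  rw [norm_inv]
  have := Complex.abs_im_le_norm ((x : ℂ) - I * s)
  have h : |s| ≤ ‖(x : ℂ) - I * s‖ := by simpa using this
  have : 0 < |s| := abs_pos.2 hs
  gcongr

/-- The resolvent identity. -/
lemma resolventFn_sub (s t : ℝ) (hs : s ≠ 0) (ht : t ≠ 0) :
    resolventFn s hs - resolventFn t ht =
      (I * (s - t)) • (resolventFn s hs * resolventFn t ht) := by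
  ext x
  have h1 := sub_I_mul_ne_zero hs x
  have h2 := sub_I_mul_ne_zero ht x
  simp only [ZeroAtInftyContinuousMap.sub_apply, ZeroAtInftyContinuousMap.smul_apply,
    ZeroAtInftyContinuousMap.mul_apply, resolventFn_apply, smul_eq_mul]
  field_simp
  ring

/-- The closed linear span of the basic resolvents. -/
noncomputable def closedSpan : Submodule ℂ C₀(ℝ, ℂ) :=
  (Submodule.span ℂ basicResolvents).topologicalClosure

lemma isClosed_closedSpan : IsClosed (closedSpan : Set C₀(ℝ, ℂ)) :=
  Submodule.isClosed_topologicalClosure _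

lemma resolventFn_mem_closedSpan (s : ℝ) (hs : s ≠ 0) : resolventFn s hs ∈ closedSpan :=
  Submodule.le_topologicalClosure _ (Submodule.subset_span (resolventFn_mem s hs))

lemma resolventFn_mul_mem_of_ne {s t : ℝ} (hs : s ≠ 0) (ht : t ≠ 0) (hst : s ≠ t) :
    resolventFn s hs * resolventFn t ht ∈ closedSpan := by
  have hc : I * ((s : ℂ) - t) ≠ 0 :=
    mul_ne_zero I_ne_zero (sub_ne_zero.2 (by exact_mod_cast hst))
  rw [← Submodule.smul_mem_iff _ hc, ← resolventFn_sub]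
  exact sub_mem (resolventFn_mem_closedSpan s hs) (resolventFn_mem_closedSpan t ht)

/-- The square of a resolvent is the limit of `ρ_s ρ_t` along `t = s (1 + δ)`, `δ → 0⁺`, by the
resolvent identity and the bound `‖ρ_s‖ ≤ |s|⁻¹`. -/
lemma resolventFn_mul_self_mem {s : ℝ} (hs : s ≠ 0) :
    resolventFn s hs * resolventFn s hs ∈ closedSpan := by
  rw [← SetLike.mem_coe, ← isClosed_closedSpan.closure_eq, Metric.mem_closure_iff]
  intro ε hε
  have hs' : 0 < |s| := abs_pos.2 hs
  -- With `t = s (1 + δ)` the distance is at most `|s| δ |s|⁻¹ ^ 3 = δ / |s| ^ 2`.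
  set δ : ℝ := ε * |s| ^ 2 / 2 with hδ
  have hδ0 : 0 < δ := by positivity
  have ht : s * (1 + δ) ≠ 0 := mul_ne_zero hs (by positivity)
  have hst : s ≠ s * (1 + δ) := by
    intro h
    have : s * δ = 0 := by linarith
    exact (mul_ne_zero hs hδ0.ne') this
  refine ⟨_, resolventFn_mul_mem_of_ne hs ht hst, ?_⟩
  have hnt : ‖resolventFn (s * (1 + δ)) ht‖ ≤ |s|⁻¹ := by
    refine (norm_resolventFn_le _ ht).trans ?_
    rw [abs_mul, abs_of_pos (by positivity : 0 < 1 + δ)]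
    gcongr
    nlinarith
  have hns := norm_resolventFn_le s hs
  have hc : ‖I * ((s : ℂ) - (s * (1 + δ) : ℝ))‖ = |s| * δ := by
    have : (s : ℂ) - (s * (1 + δ) : ℝ) = ((-(s * δ) : ℝ) : ℂ) := by push_cast; ring
    rw [this, norm_mul, norm_I, one_mul, norm_real, norm_neg, Real.norm_eq_abs, abs_mul,
      abs_of_pos hδ0]
  rw [dist_eq_norm, ← mul_sub, resolventFn_sub]
  calc ‖resolventFn s hs * ((I * ((s : ℂ) - (s * (1 + δ) : ℝ))) •
        (resolventFn s hs * resolventFn (s * (1 + δ)) ht))‖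
      ≤ ‖resolventFn s hs‖ * (‖I * ((s : ℂ) - (s * (1 + δ) : ℝ))‖ *
        (‖resolventFn s hs‖ * ‖resolventFn (s * (1 + δ)) ht‖)) := by
        refine (norm_mul_le _ _).trans ?_
        rw [norm_smul]
        gcongr
        exact norm_mul_le _ _
    _ ≤ |s|⁻¹ * (|s| * δ * (|s|⁻¹ * |s|⁻¹)) := by
        rw [hc]
        gcongr
    _ = ε / 2 := by
        rw [hδ]
        field_simp
    _ < ε := by linarith

lemma mul_mem_closedSpan {f g : C₀(ℝ, ℂ)} (hf : f ∈ closedSpan) (hg : g ∈ closedSpan) :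
    f * g ∈ closedSpan := by
  have key : ∀ a ∈ Submodule.span ℂ basicResolvents, ∀ b ∈ Submodule.span ℂ basicResolvents,
      a * b ∈ (closedSpan : Set C₀(ℝ, ℂ)) := by
    intro a ha b hb
    induction ha, hb using Submodule.span_induction₂ with
    | mem_mem a b ha hb =>
      obtain ⟨s, hs, ha⟩ := ha
      obtain ⟨t, ht, hb⟩ := hb
      obtain rfl : a = resolventFn s hs := by ext x; exact ha x
      obtain rfl : b = resolventFn t ht := by ext x; exact hb x
      by_cases h : s = t
      · subst h
        exact resolventFn_mul_self_mem hs
      · exact resolventFn_mul_mem_of_ne hs ht h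
    | zero_left b hb => rw [zero_mul]; exact closedSpan.zero_mem
    | zero_right a ha => rw [mul_zero]; exact closedSpan.zero_mem
    | add_left a b c _ _ _ h1 h2 => rw [add_mul]; exact closedSpan.add_mem h1 h2
    | add_right a b c _ _ _ h1 h2 => rw [mul_add]; exact closedSpan.add_mem h1 h2
    | smul_left r a b _ _ h => rw [smul_mul_assoc]; exact closedSpan.smul_mem r h
    | smul_right r a b _ _ h => rw [mul_smul_comm]; exact closedSpan.smul_mem r h
  have := map_mem_closure₂ continuous_mul hf hg key
  rwa [isClosed_closedSpan.closure_eq] at this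

lemma star_mem_closedSpan {f : C₀(ℝ, ℂ)} (hf : f ∈ closedSpan) : star f ∈ closedSpan := by
  have key : ∀ a ∈ Submodule.span ℂ basicResolvents,
      star a ∈ (closedSpan : Set C₀(ℝ, ℂ)) := by
    intro a ha
    induction ha using Submodule.span_induction with
    | mem a ha =>
      obtain ⟨s, hs, ha⟩ := ha
      have : star a = resolventFn (-s) (neg_ne_zero.2 hs) := by
        ext x
        simp [ha]
      rw [this]
      exact resolventFn_mem_closedSpan _ _
    | zero => rw [star_zero]; exact closedSpan.zero_mem
    | add a b _ _ h1 h2 => rw [star_add]; exact closedSpan.add_mem h1 h2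
    | smul r a _ h => rw [star_smul]; exact closedSpan.smul_mem _ h
  have := map_mem_closure continuous_star hf key
  rwa [isClosed_closedSpan.closure_eq] at this

/-- The extension of `f + c` to the one-point compactification of `ℝ`, with value `c` at `∞`. -/
noncomputable def extendAddConst (f : C₀(ℝ, ℂ)) (c : ℂ) : C(OnePoint ℝ, ℂ) where
  toFun z := z.elim c (fun x => f x + c)
  continuous_toFun := by
    rw [OnePoint.continuous_iff]
    constructor
    · have h := (zero_at_infty f).add_const c
      rw [zero_add] at h
      rw [Filter.coclosedCompact_eq_cocompact]
      exact h
    · exact (map_continuous f).add continuous_const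

@[simp] lemma extendAddConst_coe (f : C₀(ℝ, ℂ)) (c : ℂ) (x : ℝ) :
    extendAddConst f c (x : OnePoint ℝ) = f x + c := rfl

@[simp] lemma extendAddConst_infty (f : C₀(ℝ, ℂ)) (c : ℂ) :
    extendAddConst f c (OnePoint.infty : OnePoint ℝ) = c := rfl

/-- The star subalgebra of `C(OnePoint ℝ, ℂ)` consisting of the functions `g + c` with `g` in the
closed span of the resolvents and `c` constant. -/
noncomputable def unitization : StarSubalgebra ℂ C(OnePoint ℝ, ℂ) where
  carrier := {F | ∃ g ∈ closedSpan, ∃ c : ℂ, F = extendAddConst g c}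
  mul_mem' := by
    rintro _ _ ⟨f, hf, c, rfl⟩ ⟨g, hg, d, rfl⟩
    refine ⟨f * g + (d • f + c • g), add_mem (mul_mem_closedSpan hf hg)
      (add_mem (closedSpan.smul_mem d hf) (closedSpan.smul_mem c hg)), c * d, ?_⟩
    ext z
    induction z using OnePoint.rec with
    | infty => simp
    | coe x => simp; ring
  add_mem' := by
    rintro _ _ ⟨f, hf, c, rfl⟩ ⟨g, hg, d, rfl⟩
    refine ⟨f + g, add_mem hf hg, c + d, ?_⟩
    ext z
    induction z using OnePoint.rec with
    | infty => simp
    | coe x => simp; ring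
  algebraMap_mem' r := by
    refine ⟨0, closedSpan.zero_mem, r, ?_⟩
    ext z
    induction z using OnePoint.rec with
    | infty => simp
    | coe x => simp
  star_mem' := by
    rintro _ ⟨f, hf, c, rfl⟩
    refine ⟨star f, star_mem_closedSpan hf, star c, ?_⟩
    ext z
    induction z using OnePoint.rec with
    | infty => simp
    | coe x => simp

/-- A single resolvent already separates points: it is injective on `ℝ`, and nonzero there, whereas
its extension vanishes at `∞`. -/
lemma unitization_separatesPoints : unitization.SeparatesPoints := by
  intro y z hyz
  refine ⟨_, ⟨extendAddConst (resolventFn 1 one_ne_zero) 0,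
    ⟨_, resolventFn_mem_closedSpan 1 one_ne_zero, 0, rfl⟩, rfl⟩, ?_⟩
  beta_reduce
  have hne := sub_I_mul_ne_zero one_ne_zero
  induction y using OnePoint.rec with
  | infty =>
    induction z using OnePoint.rec with
    | infty => exact absurd rfl hyz
    | coe x =>
      rw [extendAddConst_infty, extendAddConst_coe, add_zero]
      exact (inv_ne_zero (hne x)).symm
  | coe w =>
    induction z using OnePoint.rec with
    | infty =>
      rw [extendAddConst_infty, extendAddConst_coe, add_zero]
      exact inv_ne_zero (hne w)
    | coe x =>
      intro h
      apply hyz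
      simpa using h

/-- The linear span of the basic resolvents `{ρ_s : s ∈ ℝ \ {0}}` is dense in `C₀(ℝ, ℂ)`
with respect to the supremum norm: the closed linear span of the basic resolvents is all of
the C*-algebra `C₀(ℝ, ℂ)` which they generate. -/
theorem span_resolvents_dense :
    Dense (Submodule.span ℂ basicResolvents : Set C₀(ℝ, ℂ)) := by
  intro f
  change f ∈ (closedSpan : Set C₀(ℝ, ℂ))
  rw [← isClosed_closedSpan.closure_eq, Metric.mem_closure_iff]
  intro ε hε
  have hF : extendAddConst f 0 ∈ unitization.topologicalClosure := by
    rw [ContinuousMap.starSubalgebra_topologicalClosure_eq_top_of_separatesPoints _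
      unitization_separatesPoints]
    trivial
  have hF' : extendAddConst f 0 ∈ closure (unitization : Set C(OnePoint ℝ, ℂ)) := hF
  obtain ⟨_, ⟨g, hg, c, rfl⟩, hd⟩ := Metric.mem_closure_iff.1 hF' (ε / 3) (by positivity)
  have hc : ‖c‖ < ε / 3 := by
    simpa using (ContinuousMap.dist_apply_le_dist (OnePoint.infty : OnePoint ℝ)).trans_lt hd
  refine ⟨g, hg, lt_of_le_of_lt (b := 2 * (ε / 3)) ?_ (by linarith)⟩
  rw [← ZeroAtInftyContinuousMap.dist_toBCF_eq_dist]
  refine (BoundedContinuousFunction.dist_le (by positivity)).2 fun x => ?_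
  change dist (f x) (g x) ≤ _
  have hx : dist (f x) (g x + c) < ε / 3 := by
    simpa using (ContinuousMap.dist_apply_le_dist (x : OnePoint ℝ)).trans_lt hd
  have hgc : dist (g x + c) (g x) = ‖c‖ := by simp
  linarith [dist_triangle (f x) (g x + c) (g x)]
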